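/- Let T be an n × n complex matrix, let c ∈ ℂ and r > 0, and assume that z·I − T is invertible for every z on the circle {z : |z − c| = r}. Let μ ∈ ℂ with |μ − c| > r, and let v ∈ ℂⁿ be a generalized eigenvector of T for μ, i.e. (μ·I − T)^n v = 0. Then (1/(2πi)) ∮_{|z−c|=r} (z·I − T)⁻¹ v dz = 0, where the contour integral is taken counterclockwise over the circle. -/

import Mathlib

open Metric

/-!
If `N = T - μ` and `N ^ k v = 0`, then the Neumann series of `(z - T)⁻¹ = ((z - μ) - N)⁻¹`
terminates on `v`, giving `(z - T)⁻¹ v = ∑ j < k, (z - μ)⁻¹ ^ (j + 1) • N ^ j v` for `z ≠ μ` in the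
resolvent set. The right-hand side is holomorphic on all of `ℂ \ {μ}`, even at the eigenvalues of
`T` inside the contour, so Cauchy's theorem applies to it on the closed disc.
-/

section Algebra

lemma smul_one_sub_mul_sum_inv_pow_smul {K A : Type*} [Field K] [Ring A] [Algebra K A]
    (a : A) {μ z : K} (hz : z ≠ μ) (k : ℕ) :
    (z • 1 - a) * ∑ j ∈ Finset.range k, (z - μ)⁻¹ ^ (j + 1) • (a - μ • 1) ^ j =
      1 - (z - μ)⁻¹ ^ k • (a - μ • 1) ^ k := by
  have hne : z - μ ≠ 0 := sub_ne_zero.mpr hz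
  have factor : z • 1 - a = (z - μ) • (1 - (z - μ)⁻¹ • (a - μ • 1)) := by
    rw [smul_sub, smul_inv_smul₀ hne, sub_smul]
    abel
  have sum_eq : ∑ j ∈ Finset.range k, (z - μ)⁻¹ ^ (j + 1) • (a - μ • 1) ^ j =
      (z - μ)⁻¹ • ∑ j ∈ Finset.range k, ((z - μ)⁻¹ • (a - μ • 1)) ^ j := by
    simp only [Finset.smul_sum, smul_pow, smul_smul, pow_succ']
  rw [factor, sum_eq, smul_mul_smul_comm, mul_inv_cancel₀ hne, one_smul, mul_neg_geom_sum,
    smul_pow]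

lemma resolvent_apply_eq_sum {K V : Type*} [Field K] [AddCommGroup V] [Module K V]
    {T : Module.End K V} {μ z : K} (hzT : z ∈ resolventSet K T) (hz : z ≠ μ) {k : ℕ} {v : V}
    (hv : ((T - μ • 1) ^ k) v = 0) :
    resolvent T z v =
      ∑ j ∈ Finset.range k, (z - μ)⁻¹ ^ (j + 1) • ((T - μ • 1) ^ j) v := by
  set S : Module.End K V := ∑ j ∈ Finset.range k, (z - μ)⁻¹ ^ (j + 1) • (T - μ • 1) ^ j with hS
  have sub_apply_S : (algebraMap K (Module.End K V) z - T) (S v) = v := by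
    rw [← Module.End.mul_apply, Algebra.algebraMap_eq_smul_one, hS,
      smul_one_sub_mul_sum_inv_pow_smul T hz, LinearMap.sub_apply, LinearMap.smul_apply, hv,
      smul_zero, sub_zero, Module.End.one_apply]
  calc resolvent T z v
      = resolvent T z ((algebraMap K (Module.End K V) z - T) (S v)) := by
        rw [sub_apply_S]
    _ = S v := by
        rw [← Module.End.mul_apply, resolvent,
          Ring.inverse_mul_cancel _ (spectrum.mem_resolventSet_iff.mp hzT), Module.End.one_apply]
    _ = ∑ j ∈ Finset.range k, (z - μ)⁻¹ ^ (j + 1) • ((T - μ • 1) ^ j) v := by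
        simp only [hS, LinearMap.sum_apply, LinearMap.smul_apply]

lemma algEquiv_map_resolvent {R A B : Type*} [CommRing R] [Ring A] [Ring B] [Algebra R A]
    [Algebra R B] (e : A ≃ₐ[R] B) (a : A) (z : R) :
    e (resolvent a z) = resolvent (e a) z := by
  by_cases h : IsUnit (algebraMap R A z - a)
  · have map_sub_eq : e (algebraMap R A z - a) = algebraMap R B z - e a := by
      rw [map_sub, e.commutes]
    have h' : IsUnit (algebraMap R B z - e a) := map_sub_eq ▸ h.map e
    refine h'.mul_left_cancel ?_
    rw [resolvent, resolvent, Ring.mul_inverse_cancel _ h', ← map_sub_eq, ← map_mul,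
      Ring.mul_inverse_cancel _ h, map_one]
  · have hz : z ∈ spectrum R a := h
    rw [spectrum.resolvent_zero_of_mem_spectrum hz, map_zero,
      spectrum.resolvent_zero_of_mem_spectrum (AlgEquiv.spectrum_eq e a ▸ hz)]

end Algebra

section Matrix

variable {ι R : Type*} [Fintype ι] [DecidableEq ι] [CommRing R]

lemma resolvent_toLinAlgEquiv'_apply (T : Matrix ι ι R) (z : R) (v : ι → R) :
    resolvent (Matrix.toLinAlgEquiv' T) z v = ((z • (1 : Matrix ι ι R) - T)⁻¹).mulVec v := by
  rw [← algEquiv_map_resolvent, Matrix.toLinAlgEquiv'_apply, resolvent,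
    Algebra.algebraMap_eq_smul_one, Matrix.nonsing_inv_eq_ringInverse]

lemma mem_resolventSet_toLinAlgEquiv' {T : Matrix ι ι R} {z : R}
    (hz : IsUnit (z • (1 : Matrix ι ι R) - T)) :
    z ∈ resolventSet R (Matrix.toLinAlgEquiv' T) := by
  refine AlgHom.mem_resolventSet_apply Matrix.toLinAlgEquiv' ?_
  rwa [spectrum.mem_resolventSet_iff, Algebra.algebraMap_eq_smul_one]

lemma mem_maxGenEigenspace_toLinAlgEquiv' {T : Matrix ι ι R} {μ : R} {k : ℕ} {v : ι → R}
    (hv : ((μ • (1 : Matrix ι ι R) - T) ^ k).mulVec v = 0) :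
    v ∈ Module.End.maxGenEigenspace (Matrix.toLinAlgEquiv' T) μ := by
  refine (Module.End.mem_maxGenEigenspace _ _ _).mpr ⟨k, ?_⟩
  rw [← map_one Matrix.toLinAlgEquiv', ← map_smul, ← map_sub, ← map_pow,
    Matrix.toLinAlgEquiv'_apply, ← neg_sub, neg_pow, ← Matrix.mulVec_mulVec, hv,
    Matrix.mulVec_zero]

end Matrix

section Contour

variable {E : Type*} [NormedAddCommGroup E] [NormedSpace ℂ E]

lemma differentiableOn_sum_inv_sub_pow_smul (μ : ℂ) (w : ℕ → E) (k : ℕ) :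
    DifferentiableOn ℂ (fun z ↦ ∑ j ∈ Finset.range k, (z - μ)⁻¹ ^ (j + 1) • w j) {μ}ᶜ := by
  refine DifferentiableOn.fun_sum fun j _ ↦ DifferentiableOn.smul_const ?_ (w j)
  exact ((differentiableOn_id.sub_const μ).inv fun z hz ↦ sub_ne_zero.mpr hz).pow (j + 1)

theorem riesz_projection_eq_zero_on_generalized_eigenspace_general [CompleteSpace E]
    {T : Module.End ℂ E} {c : ℂ} {r : ℝ} (hr : 0 ≤ r) (hres : sphere c r ⊆ resolventSet ℂ T)
    {μ : ℂ} (hμ : r < dist μ c) {v : E} (hv : v ∈ T.maxGenEigenspace μ) :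
    (2 * Real.pi * Complex.I : ℂ)⁻¹ • (∮ z in C(c, r), resolvent T z v) = 0 := by
  obtain ⟨k, hk⟩ := (Module.End.mem_maxGenEigenspace T μ v).mp hv
  have closedBall_subset : closedBall c r ⊆ {μ}ᶜ :=
    Set.subset_compl_singleton_iff.mpr fun h ↦ hμ.not_ge (mem_closedBall.mp h)
  have resolvent_eq_sum : Set.EqOn (fun z ↦ resolvent T z v)
      (fun z ↦ ∑ j ∈ Finset.range k, (z - μ)⁻¹ ^ (j + 1) • ((T - μ • 1) ^ j) v) (sphere c r) :=
    fun z hz ↦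
      resolvent_apply_eq_sum (hres hz) (closedBall_subset (sphere_subset_closedBall hz)) hk
  have sum_diffContOnCl : DiffContOnCl ℂ
      (fun z ↦ ∑ j ∈ Finset.range k, (z - μ)⁻¹ ^ (j + 1) • ((T - μ • 1) ^ j) v) (ball c r) :=
    ((differentiableOn_sum_inv_sub_pow_smul μ (fun j ↦ ((T - μ • 1) ^ j) v) k).mono
      closedBall_subset).diffContOnCl_ball subset_rfl
  rw [circleIntegral.integral_congr hr resolvent_eq_sum,
    sum_diffContOnCl.circleIntegral_eq_zero hr, smul_zero]

end Contour

/-- The Riesz spectral projection `E = (1/2πi) ∮_Γ (zI - T)⁻¹ dz` annihilates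
generalized eigenvectors of eigenvalues `μ` lying outside the contour `Γ`. -/
theorem riesz_projection_eq_zero_on_generalized_eigenspace
    (n : ℕ) (T : Matrix (Fin n) (Fin n) ℂ) (c : ℂ) (r : ℝ) (hr : 0 < r)
    (hres : ∀ z ∈ sphere c r, IsUnit (z • (1 : Matrix (Fin n) (Fin n) ℂ) - T))
    (μ : ℂ) (hμ : r < dist μ c)
    (v : Fin n → ℂ)
    (hv : ((μ • (1 : Matrix (Fin n) (Fin n) ℂ) - T) ^ n).mulVec v = 0) :
    (2 * Real.pi * Complex.I : ℂ)⁻¹ •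
      (∮ z in C(c, r), ((z • (1 : Matrix (Fin n) (Fin n) ℂ) - T)⁻¹).mulVec v) = 0 := by
  simpa only [resolvent_toLinAlgEquiv'_apply] using
    riesz_projection_eq_zero_on_generalized_eigenspace_general (T := Matrix.toLinAlgEquiv' T) hr.le
      (fun z hz ↦ mem_resolventSet_toLinAlgEquiv' (hres z hz)) hμ
      (mem_maxGenEigenspace_toLinAlgEquiv' hv)
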